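/- With f(x⃗) := −Σ_{k=0}^{n} (k!/∏_{j=0}^{k}(β−j)) S_{n,k} and p_i(x⃗) := Σ_{k=1}^{n} (−k!/∏_{j=0}^{k}(β−j)) S_{n∖i, k−1}(x⃗), where S_{n∖i,k} is the k-th elementary symmetric polynomial in the variables {x_j : j ≠ i}, the following polynomial identity holds in F[x₁,…,x_n]: (Σ_{i=1}^{n} xᵢ − β) · f(x⃗) = 1 + Σ_{i=1}^{n} (xᵢ² − xᵢ) · p_i(x⃗). In particular, C(x⃗,y⃗) := y₀·f(x⃗) + Σᵢ yᵢ·(−p_i(x⃗)) is a y⃗-linear IPS certificate of unsatisfiability for the subset sum instance with axioms Σᵢ xᵢ − β and xᵢ² − xᵢ (i ∈ [n]). -/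

import Mathlib

/-!
Write `eₖ` for the elementary symmetric polynomials in all variables, `eₖ⁽ⁱ⁾` for those omitting
`xᵢ`, and `cₖ = k! / ∏_{j ≤ k} (β - j)`. Since `xᵢ eₖ⁽ⁱ⁾` collects the monomials of `eₖ₊₁` that
contain `xᵢ`, modulo the Boolean axioms multiplication by `∑ xᵢ` acts on `eₖ` as
`eₖ ↦ k eₖ + (k + 1) eₖ₊₁`, the error being exactly `∑ (xᵢ² - xᵢ) eₖ₋₁⁽ⁱ⁾`. As
`(β - (k + 1)) cₖ₊₁ = (k + 1) cₖ`, the products `(∑ xᵢ - β) cₖ eₖ` telescope, apart from these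
errors, from `-1` to a multiple of `eₙ₊₁ = 0`.
-/

open MvPolynomial

section ElementarySymmetric

variable {ι R : Type*} [CommSemiring R]

theorem esymm_cons_succ (a : R) (s : Multiset R) (k : ℕ) :
    (a ::ₘ s).esymm (k + 1) = s.esymm (k + 1) + a * s.esymm k := by
  simp [Multiset.esymm, Multiset.powersetCard_cons, Multiset.sum_map_mul_left]

theorem esymm_map_eq_zero_of_card_lt {s : Finset ι} {k : ℕ} (hk : s.card < k) (x : ι → R) :
    (s.val.map x).esymm k = 0 := by
  rw [Finset.esymm_map_val, Finset.powersetCard_eq_empty.mpr hk, Finset.sum_empty]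

variable [DecidableEq ι]

theorem esymm_map_succ_eq_erase {s : Finset ι} {i : ι} (hi : i ∈ s) (x : ι → R) (k : ℕ) :
    (s.val.map x).esymm (k + 1) =
      ((s.erase i).val.map x).esymm (k + 1) + x i * ((s.erase i).val.map x).esymm k := by
  rw [← esymm_cons_succ, ← Multiset.map_cons, Finset.erase_val, Multiset.cons_erase hi]

theorem mul_esymm_map_erase {s : Finset ι} {i : ι} (hi : i ∈ s) (x : ι → R) (k : ℕ) :
    x i * ((s.erase i).val.map x).esymm k =
      ∑ T ∈ s.powersetCard (k + 1) with i ∈ T, ∏ j ∈ T, x j := by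
  rw [Finset.esymm_map_val, Finset.mul_sum]
  have notMem : ∀ T ∈ (s.erase i).powersetCard k, i ∉ T := fun _ hT hiT =>
    Finset.notMem_erase i s ((Finset.mem_powersetCard.mp hT).1 hiT)
  refine Finset.sum_nbij' (insert i) (Finset.erase · i) ?_ ?_
    (fun T hT => Finset.erase_insert (notMem T hT))
    (fun T hT => Finset.insert_erase (Finset.mem_filter.mp hT).2)
    fun T hT => (Finset.prod_insert (notMem T hT)).symm
  · grind
  · grind

theorem sum_mul_esymm_map_erase (s : Finset ι) (x : ι → R) (k : ℕ) :
    ∑ i ∈ s, x i * ((s.erase i).val.map x).esymm k = (k + 1) * (s.val.map x).esymm (k + 1) := by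
  calc ∑ i ∈ s, x i * ((s.erase i).val.map x).esymm k
    _ = ∑ i ∈ s, ∑ T ∈ s.powersetCard (k + 1) with i ∈ T, ∏ j ∈ T, x j :=
      Finset.sum_congr rfl fun _ hi => mul_esymm_map_erase hi x k
    _ = ∑ T ∈ s.powersetCard (k + 1), ∑ _i ∈ T, ∏ j ∈ T, x j := by
      refine Finset.sum_comm' ?_
      simp only [Finset.mem_filter, Finset.mem_powersetCard]
      grind
    _ = ∑ T ∈ s.powersetCard (k + 1), (k + 1) * ∏ j ∈ T, x j := by
      refine Finset.sum_congr rfl fun T hT => ?_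
      rw [Finset.sum_const, (Finset.mem_powersetCard.mp hT).2, nsmul_eq_mul, Nat.cast_succ]
    _ = (k + 1) * (s.val.map x).esymm (k + 1) := by
      rw [Finset.esymm_map_val, Finset.mul_sum]

end ElementarySymmetric

section Telescoping

variable {ι R : Type*} [DecidableEq ι] [CommRing R]

theorem sum_sub_mul_esymm_map (s : Finset ι) (x : ι → R) (k : ℕ) :
    (∑ i ∈ s, x i - (k + 1)) * (s.val.map x).esymm (k + 1) =
      (k + 2) * (s.val.map x).esymm (k + 2) +
        ∑ i ∈ s, (x i ^ 2 - x i) * ((s.erase i).val.map x).esymm k := by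
  have expand : (∑ i ∈ s, x i) * (s.val.map x).esymm (k + 1) =
      ∑ i ∈ s, x i * ((s.erase i).val.map x).esymm (k + 1) +
        ∑ i ∈ s, x i ^ 2 * ((s.erase i).val.map x).esymm k := by
    rw [Finset.sum_mul, ← Finset.sum_add_distrib]
    refine Finset.sum_congr rfl fun i hi => ?_
    rw [esymm_map_succ_eq_erase hi]
    ring
  have count := sum_mul_esymm_map_erase s x (k + 1)
  push_cast at count
  simp only [sub_mul, Finset.sum_sub_distrib]
  linear_combination expand + count + sum_mul_esymm_map_erase s x k

theorem sum_sub_mul_sum_range_esymm_map (s : Finset ι) (x : ι → R) {b : R} {c : ℕ → R} {m : ℕ}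
    (hc_zero : b * c 0 = 1) (hc_succ : ∀ k < m, (b - (k + 1)) * c (k + 1) = (k + 1) * c k) :
    (∑ i ∈ s, x i - b) * ∑ k ∈ Finset.range (m + 1), c k * (s.val.map x).esymm k =
      (m + 1) * c m * (s.val.map x).esymm (m + 1) - 1 +
        ∑ k ∈ Finset.range m,
          c (k + 1) * ∑ i ∈ s, (x i ^ 2 - x i) * ((s.erase i).val.map x).esymm k := by
  induction m with
  | zero =>
    have esymm_zero : (s.val.map x).esymm 0 = 1 := by simp [Multiset.esymm]
    have esymm_one : (s.val.map x).esymm 1 = ∑ i ∈ s, x i := by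
      simp [Finset.esymm_map_val, Finset.powersetCard_one]
    simp only [zero_add, Finset.sum_range_one, Finset.sum_range_zero, Nat.cast_zero, esymm_zero,
      esymm_one]
    linear_combination -hc_zero
  | succ m ih =>
    rw [Finset.sum_range_succ _ (m + 1), mul_add,
      ih fun k hk => hc_succ k (hk.trans m.lt_succ_self), Finset.sum_range_succ _ m]
    push_cast
    linear_combination c (m + 1) * sum_sub_mul_esymm_map s x m -
      (s.val.map x).esymm (m + 1) * hc_succ m m.lt_succ_self

end Telescoping

section IPS

variable {σ τ R : Type*} [CommSemiring R]

/-- `P` is an IPS (ideal proof system) certificate of unsatisfiability for the system `a j = 0`.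
The variables `x` of the system are indexed by `σ` (`Sum.inl`), and the placeholder variables `y`
for its axioms by `τ` (`Sum.inr`). -/
def IsIPSCertificate (a : τ → MvPolynomial σ R) (P : MvPolynomial (σ ⊕ τ) R) : Prop :=
  aeval (Sum.elim X a) P = 1 ∧ aeval (Sum.elim X fun _ => (0 : MvPolynomial σ R)) P = 0

/-- The `y`-linear polynomial `∑ j, yⱼ gⱼ(x)`, the shape of a certificate in linear IPS. -/
noncomputable def linearCertificate [Fintype τ] (g : τ → MvPolynomial σ R) :
    MvPolynomial (σ ⊕ τ) R :=
  ∑ j, X (Sum.inr j) * rename Sum.inl (g j)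

theorem aeval_linearCertificate [Fintype τ] (a g : τ → MvPolynomial σ R) :
    aeval (Sum.elim X a) (linearCertificate g) = ∑ j, a j * g j := by
  simp only [linearCertificate, map_sum, map_mul, aeval_X, Sum.elim_inr, aeval_rename,
    Sum.elim_comp_inl, aeval_X_left_apply]

theorem isIPSCertificate_linearCertificate_iff [Fintype τ] {a g : τ → MvPolynomial σ R} :
    IsIPSCertificate a (linearCertificate g) ↔ ∑ j, a j * g j = 1 := by
  simp only [IsIPSCertificate, aeval_linearCertificate, zero_mul, Finset.sum_const_zero, and_true]

end IPS

section SubsetSum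

variable {F : Type*} [Field F]

/-- The coefficient `k! / ∏_{j ≤ k} (β - j)` of the `k`-th elementary symmetric polynomial in the
subset sum refutation. -/
def subsetSumCoeff (β : F) (k : ℕ) : F :=
  (k.factorial : F) / ∏ j ∈ Finset.range (k + 1), (β - (j : F))

theorem mul_subsetSumCoeff_zero {β : F} (hβ : β ≠ 0) : β * subsetSumCoeff β 0 = 1 := by
  simp [subsetSumCoeff, hβ]

theorem sub_mul_subsetSumCoeff_succ {β : F} {k : ℕ} (hβ : β ≠ (k + 1 : ℕ)) :
    (β - (k + 1)) * subsetSumCoeff β (k + 1) = (k + 1) * subsetSumCoeff β k := by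
  have hne : β - (k + 1) ≠ 0 := by
    rw [← Nat.cast_succ]
    exact sub_ne_zero.mpr hβ
  rw [subsetSumCoeff, subsetSumCoeff, Finset.prod_range_succ _ (k + 1), Nat.factorial_succ]
  push_cast
  rw [mul_comm (∏ j ∈ _, _), ← mul_div_assoc, mul_div_mul_left _ _ hne, mul_div_assoc]

variable (σ : Type*) [Fintype σ]

/-- The cofactor `f` of the subset sum axiom `∑ xᵢ - β` in its refutation. -/
noncomputable def subsetSumCofactor (β : F) : MvPolynomial σ F :=
  -∑ k ∈ Finset.range (Fintype.card σ + 1),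
    C (subsetSumCoeff β k) * (Finset.univ.val.map X).esymm k

variable {σ} [DecidableEq σ]

/-- The quotient `pᵢ` by the Boolean axiom `xᵢ² - xᵢ` when `(∑ xᵢ - β) f` is reduced to `1` modulo
these axioms; in the refutation the cofactor of `xᵢ² - xᵢ` is therefore `-pᵢ`. -/
noncomputable def booleanQuotient (β : F) (i : σ) : MvPolynomial σ F :=
  ∑ k ∈ Finset.Icc 1 (Fintype.card σ),
    C (-subsetSumCoeff β k) * ((Finset.univ.erase i).val.map X).esymm (k - 1)

/-- The axioms of the subset sum instance: `none` stands for `∑ xᵢ - β` and `some i` for the Boolean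
axiom `xᵢ² - xᵢ`. -/
noncomputable def subsetSumAxiom (β : F) : Option σ → MvPolynomial σ F :=
  fun o => o.elim ((∑ i, X i) - C β) fun i => X i ^ 2 - X i

theorem booleanQuotient_eq_sum_range (β : F) (i : σ) :
    booleanQuotient β i = -∑ k ∈ Finset.range (Fintype.card σ),
      C (subsetSumCoeff β (k + 1)) * ((Finset.univ.erase i).val.map X).esymm k := by
  rw [booleanQuotient, ← Finset.sum_neg_distrib, Finset.range_eq_Ico,
    ← Finset.Ico_add_one_right_eq_Icc, ← zero_add 1, ← Finset.sum_Ico_add']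
  simp only [zero_add, Nat.add_sub_cancel, C_neg, neg_mul]

theorem sum_sub_C_mul_subsetSumCofactor {β : F} (hβ : ∀ j ≤ Fintype.card σ, β ≠ (j : F)) :
    ((∑ i, X i) - C β) * subsetSumCofactor σ β =
      1 + ∑ i, (X i ^ 2 - X i) * booleanQuotient β i := by
  have hc_zero : (C β : MvPolynomial σ F) * C (subsetSumCoeff β 0) = 1 := by
    have hβ_zero : β ≠ 0 := by simpa using hβ 0 (Nat.zero_le _)
    rw [← C_mul, mul_subsetSumCoeff_zero hβ_zero, C_1]
  have hc_succ (k : ℕ) (hk : k < Fintype.card σ) :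
      (C β - ((k : MvPolynomial σ F) + 1)) * C (subsetSumCoeff β (k + 1)) =
        ((k : MvPolynomial σ F) + 1) * C (subsetSumCoeff β k) := by
    simpa using congrArg (C (σ := σ)) (sub_mul_subsetSumCoeff_succ (hβ (k + 1) hk))
  have telescope := sum_sub_mul_sum_range_esymm_map Finset.univ X
    (c := fun k => C (subsetSumCoeff β k)) hc_zero hc_succ
  have esymm_vanishes : (Finset.univ.val.map (X : σ → MvPolynomial σ F)).esymm
      (Fintype.card σ + 1) = 0 :=
    esymm_map_eq_zero_of_card_lt (Nat.lt_succ_self _) X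
  rw [esymm_vanishes] at telescope
  have quotients : ∑ i : σ, (X i ^ 2 - X i) * booleanQuotient β i =
      -∑ k ∈ Finset.range (Fintype.card σ), C (subsetSumCoeff β (k + 1)) *
        ∑ i, (X i ^ 2 - X i) * ((Finset.univ.erase i).val.map X).esymm k := by
    simp only [booleanQuotient_eq_sum_range, mul_neg, Finset.sum_neg_distrib, Finset.mul_sum]
    rw [Finset.sum_comm]
    simp only [mul_left_comm]
  rw [subsetSumCofactor, quotients]
  linear_combination -telescope

theorem stmt7_general {β : F} (hβ : ∀ j ≤ Fintype.card σ, β ≠ (j : F)) :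
    ((∑ i, X i) - C β) * subsetSumCofactor σ β =
        1 + ∑ i, (X i ^ 2 - X i) * booleanQuotient β i ∧
      IsIPSCertificate (subsetSumAxiom β) (linearCertificate fun o : Option σ =>
        o.elim (subsetSumCofactor σ β) fun i => -booleanQuotient β i) := by
  have identity := sum_sub_C_mul_subsetSumCofactor hβ
  refine ⟨identity, isIPSCertificate_linearCertificate_iff.mpr ?_⟩
  simp only [Fintype.sum_option, subsetSumAxiom, Option.elim_none, Option.elim_some, identity,
    mul_neg, Finset.sum_neg_distrib, add_neg_cancel_right]

end SubsetSum

/-- The subset-sum refutation identity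
`(Σᵢ xᵢ − β)·f = 1 + Σᵢ (xᵢ² − xᵢ)·pᵢ` in `F[x₁,…,xₙ]`, where `f` and the `pᵢ`
are built from elementary symmetric polynomials; consequently the `y`-linear
polynomial `C = y₀·f + Σᵢ yᵢ·(−pᵢ)` is an IPS certificate for the subset sum
instance (it evaluates to `1` on the axioms and to `0` when all `y` are `0`). -/
theorem stmt7 (n : ℕ) (F : Type*) [Field F]
    (hchar : ringChar F = 0 ∨ n < ringChar F)
    (β : F) (hβ : ∀ j : ℕ, j ≤ n → β ≠ (j : F)) :
    let S : ℕ → MvPolynomial (Fin n) F := fun k =>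
      ∑ T ∈ Finset.univ.powersetCard k, ∏ i ∈ T, X i
    let Si : Fin n → ℕ → MvPolynomial (Fin n) F := fun i k =>
      ∑ T ∈ (Finset.univ.erase i).powersetCard k, ∏ j ∈ T, X j
    let f : MvPolynomial (Fin n) F :=
      -(∑ k ∈ Finset.range (n + 1),
          C ((k.factorial : F) / ∏ j ∈ Finset.range (k + 1), (β - (j : F))) * S k)
    let p : Fin n → MvPolynomial (Fin n) F := fun i =>
      ∑ k ∈ Finset.Icc 1 n,
        C (-(k.factorial : F) / ∏ j ∈ Finset.range (k + 1), (β - (j : F))) *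
          Si i (k - 1)
    let Ccert : MvPolynomial (Fin n ⊕ Option (Fin n)) F :=
      X (Sum.inr none) * rename Sum.inl f +
        ∑ i : Fin n, X (Sum.inr (some i)) * rename Sum.inl (-(p i))
    ((∑ i, X i) - C β) * f = 1 + ∑ i, (X i ^ 2 - X i) * p i ∧
    aeval (Sum.elim X (fun o : Option (Fin n) =>
        Option.elim o ((∑ i, X i) - C β) (fun i => X i ^ 2 - X i))) Ccert = 1 ∧
    aeval (Sum.elim X (fun _ : Option (Fin n) =>
        (0 : MvPolynomial (Fin n) F))) Ccert = 0 := by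
  simpa only [subsetSumCofactor, booleanQuotient, subsetSumCoeff, IsIPSCertificate, subsetSumAxiom,
    linearCertificate, Fintype.sum_option, Option.elim_none, Option.elim_some,
    Finset.esymm_map_val, Fintype.card_fin, neg_div] using!
    stmt7_general (σ := Fin n) (β := β) (by simpa only [Fintype.card_fin] using hβ)
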